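/- Let G₁ and G₂ be discrete abelian groups, σ₁ a 2-cocycle on G₁, σ₂ a 2-cocycle on G₂, f : G₁ × G₂ → 𝕋 a bihomomorphism, and let σ be the 2-cocycle on G₁ × G₂ defined by σ((g₁,g₂),(h₁,h₂)) = σ₁(g₁,h₁)σ₂(g₂,h₂)f(h₁,g₂). Assume that f(h₁,g₂) = 1 for every (g₁,g₂) ∈ Z(G₁×G₂,σ) and every h₁ ∈ G₁. Then the image of Z(G₁×G₂,σ) under the first-coordinate projection is contained in Z(G₁,σ₁), and the index of Z(G₁×G₂,σ) in G₁×G₂ is at least the index of Z(G₁,σ₁) in G₁; in particular, if [G₁ : Z(G₁,σ₁)] is infinite then so is [G₁×G₂ : Z(G₁×G₂,σ)]. -/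

import Mathlib

/-- A (normalized) 2-cocycle on a discrete group `G` with values in the circle group. -/
def IsTwoCocycle {G : Type*} [Group G] (σ : G → G → Circle) : Prop :=
  (∀ g, σ g 1 = 1) ∧ (∀ g, σ 1 g = 1) ∧
    ∀ g h k, σ g h * σ (g * h) k = σ h k * σ g (h * k)

/-- The twisted center `Z(G,σ)`: all central elements `g` such that `σ(g,h) = σ(h,g)`
for every `h ∈ G`. -/
def twistedCenter {G : Type*} [Group G] (σ : G → G → Circle) : Set G :=
  {g | g ∈ Subgroup.center G ∧ ∀ h, σ g h = σ h g}

/-- The collection of left cosets `b • A` with `b` ranging over `B`.  When `A` is (the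
carrier of) a subgroup contained in `B`, this is the coset space of `A` in `B`; its
cardinality is the index of `A` in `B`. -/
def cosetsIn {G : Type*} [Group G] (A B : Set G) : Set (Set G) :=
  {C | ∃ b ∈ B, C = (fun a => b * a) '' A}

/-! Against an element `(h, 1)`, an element `g` of `Z(G₁ × G₂, σ)` satisfies
`σ₁(g₁, h) f(h, g₂) = σ₁(h, g₁)`, so `g₁` lies in `Z(G₁, σ₁)` exactly when `f(·, g₂)` is trivial.
Twisted centers are subgroups, because `g ↦ σ(g, h) / σ(h, g)` is multiplicative on the elements
commuting with `h`; so the first projection induces a surjection from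
`(G₁ × G₂) / Z(G₁ × G₂, σ)` onto `G₁ / Z(G₁, σ₁)`. -/

section

open Cardinal
open scoped Pointwise

universe u v

section Index

variable {G : Type u} [Group G] {H : Type v} [Group H]

theorem cosetsIn_univ (A : Set G) : cosetsIn A Set.univ = MulAction.orbit G A :=
  Set.ext fun _ => ⟨fun ⟨b, _, hC⟩ => ⟨b, hC.symm⟩, fun ⟨b, hC⟩ => ⟨b, Set.mem_univ b, hC.symm⟩⟩

theorem mk_cosetsIn_univ (A : Subgroup G) : #(cosetsIn (A : Set G) Set.univ) = #(G ⧸ A) := by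
  rw [cosetsIn_univ, mk_congr (MulAction.orbitEquivQuotientStabilizer G (A : Set G)),
    MulAction.stabilizer_subgroup]

theorem lift_mk_quotient_le_of_surjective {φ : G →* H} (hφ : Function.Surjective φ)
    {A : Subgroup G} {B : Subgroup H} (hAB : A ≤ B.comap φ) :
    lift.{u} #(H ⧸ B) ≤ lift.{v} #(G ⧸ A) := by
  let ψ : G ⧸ A → H ⧸ B := Quotient.map' φ fun a b hab => by
    rw [QuotientGroup.leftRel_apply] at hab ⊢
    simpa using hAB hab
  have hψ : Function.Surjective ψ := by
    rintro ⟨y⟩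
    obtain ⟨x, rfl⟩ := hφ y
    exact ⟨x, rfl⟩
  exact lift_mk_le_lift_mk_of_surjective hψ

end Index

section TwistedCenter

variable {G : Type*} [Group G] {σ : G → G → Circle}

theorem commute_of_mem_twistedCenter {g : G} (hg : g ∈ twistedCenter σ) (h : G) : Commute g h :=
  (Subgroup.mem_center_iff.mp hg.1 h).symm

namespace IsTwoCocycle

theorem div_swap_mul_left (hσ : IsTwoCocycle σ) {a b h : G} (ha : Commute a h)
    (hb : Commute b h) :
    σ (a * b) h / σ h (a * b) = σ a h / σ h a * (σ b h / σ h b) := by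
  obtain ⟨-, -, hc⟩ := hσ
  calc σ (a * b) h / σ h (a * b)
      = σ a b * σ (a * b) h / (σ a b * σ h (a * b)) := (mul_div_mul_left_eq_div ..).symm
    _ = σ b h * σ a (h * b) / (σ h a * σ (a * h) b) := by rw [hc a b h, ← hc h a b, ha.eq, hb.eq]
    _ = σ b h * (σ h b * σ a (h * b)) / (σ h b * (σ h a * σ (a * h) b)) := by
      rw [mul_left_comm, mul_div_mul_left_eq_div]
    _ = σ b h * (σ a h * σ (a * h) b) / (σ h b * (σ h a * σ (a * h) b)) := by rw [← hc a h b]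
    _ = σ a h / σ h a * (σ b h / σ h b) := by
      simp only [← mul_assoc, mul_div_mul_right_eq_div, div_mul_div_comm]
      rw [mul_comm (σ b h), mul_comm (σ h b)]

/-- The twisted center of a 2-cocycle as a subgroup, so that its index is the cardinality of a
quotient. -/
noncomputable def twistedCenterSubgroup (hσ : IsTwoCocycle σ) : Subgroup G where
  carrier := twistedCenter σ
  one_mem' := ⟨one_mem _, fun h => by rw [hσ.1, hσ.2.1]⟩
  mul_mem' {a b} ha hb := by
    refine ⟨mul_mem ha.1 hb.1, fun h => div_eq_one.mp ?_⟩
    rw [hσ.div_swap_mul_left (commute_of_mem_twistedCenter ha h)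
      (commute_of_mem_twistedCenter hb h), ha.2 h, hb.2 h, div_self', div_self', one_mul]
  inv_mem' {a} ha := by
    refine ⟨inv_mem ha.1, fun h => div_eq_one.mp ?_⟩
    have hcomm := commute_of_mem_twistedCenter ha h
    have hinv := hσ.div_swap_mul_left hcomm hcomm.inv_left
    rwa [mul_inv_cancel, hσ.1, hσ.2.1, ha.2 h, div_self', div_self', one_mul, eq_comm] at hinv

theorem mk_cosetsIn_twistedCenter (hσ : IsTwoCocycle σ) :
    #(cosetsIn (twistedCenter σ) Set.univ) = #(G ⧸ hσ.twistedCenterSubgroup) :=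
  mk_cosetsIn_univ hσ.twistedCenterSubgroup

end IsTwoCocycle

end TwistedCenter

section Product

variable {G₁ : Type u} {G₂ : Type v} [Group G₁] [Group G₂]
  {σ₁ : G₁ → G₁ → Circle} {σ₂ : G₂ → G₂ → Circle} {f : G₁ →* G₂ →* Circle}

/-- The product of `σ₁` and `σ₂` twisted by the bihomomorphism `f`, which is curried so that both of
its homomorphism properties are bundled. -/
noncomputable def twistedProduct (σ₁ : G₁ → G₁ → Circle) (σ₂ : G₂ → G₂ → Circle)
    (f : G₁ →* G₂ →* Circle) (g h : G₁ × G₂) : Circle :=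
  σ₁ g.1 h.1 * σ₂ g.2 h.2 * f h.1 g.2

theorem isTwoCocycle_twistedProduct (hσ₁ : IsTwoCocycle σ₁) (hσ₂ : IsTwoCocycle σ₂)
    (f : G₁ →* G₂ →* Circle) : IsTwoCocycle (twistedProduct σ₁ σ₂ f) := by
  refine ⟨fun g => ?_, fun g => ?_, fun g h k => ?_⟩
  · simp [twistedProduct, hσ₁.1, hσ₂.1]
  · simp [twistedProduct, hσ₁.2.1, hσ₂.2.1]
  · have hf_left : f (h.1 * k.1) g.2 = f h.1 g.2 * f k.1 g.2 := by rw [map_mul, MonoidHom.mul_apply]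
    have hf_right : f k.1 (g.2 * h.2) = f k.1 g.2 * f k.1 h.2 := map_mul ..
    calc twistedProduct σ₁ σ₂ f g h * twistedProduct σ₁ σ₂ f (g * h) k
      _ = σ₁ g.1 h.1 * σ₁ (g.1 * h.1) k.1 * (σ₂ g.2 h.2 * σ₂ (g.2 * h.2) k.2) *
          (f h.1 g.2 * (f k.1 g.2 * f k.1 h.2)) := by
        simp only [twistedProduct, Prod.fst_mul, Prod.snd_mul, hf_right]
        ac_rfl
      _ = σ₁ h.1 k.1 * σ₁ g.1 (h.1 * k.1) * (σ₂ h.2 k.2 * σ₂ g.2 (h.2 * k.2)) *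
          (f h.1 g.2 * (f k.1 g.2 * f k.1 h.2)) := by rw [hσ₁.2.2, hσ₂.2.2]
      _ = twistedProduct σ₁ σ₂ f h k * twistedProduct σ₁ σ₂ f g (h * k) := by
        simp only [twistedProduct, Prod.fst_mul, Prod.snd_mul, hf_left]
        ac_rfl

theorem fst_mem_twistedCenter_iff (hσ₂ : IsTwoCocycle σ₂) {g : G₁ × G₂}
    (hg : g ∈ twistedCenter (twistedProduct σ₁ σ₂ f)) :
    g.1 ∈ twistedCenter σ₁ ↔ ∀ h, f h g.2 = 1 := by
  have hcenter : g.1 ∈ Subgroup.center G₁ :=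
    Subgroup.mem_center_iff.mpr fun h =>
      congrArg Prod.fst (commute_of_mem_twistedCenter hg (h, 1)).symm
  have hswap (h : G₁) : σ₁ g.1 h * f h g.2 = σ₁ h g.1 := by
    simpa [twistedProduct, hσ₂.1, hσ₂.2.1] using hg.2 (h, 1)
  simp only [twistedCenter, Set.mem_ofPred_eq, hcenter, true_and, ← hswap, left_eq_mul]

theorem twistedCenter_product_projection_general (hσ₁ : IsTwoCocycle σ₁) (hσ₂ : IsTwoCocycle σ₂)
    (hvanish : ∀ g ∈ twistedCenter (twistedProduct σ₁ σ₂ f), ∀ h₁ : G₁, f h₁ g.2 = 1) :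
    (Prod.fst '' twistedCenter (twistedProduct σ₁ σ₂ f) ⊆ twistedCenter σ₁) ∧
      lift.{v} #(cosetsIn (twistedCenter σ₁) Set.univ) ≤
        #(cosetsIn (twistedCenter (twistedProduct σ₁ σ₂ f)) Set.univ) ∧
      ((cosetsIn (twistedCenter σ₁) Set.univ).Infinite →
        (cosetsIn (twistedCenter (twistedProduct σ₁ σ₂ f)) Set.univ).Infinite) := by
  have hfst : ∀ g ∈ twistedCenter (twistedProduct σ₁ σ₂ f), g.1 ∈ twistedCenter σ₁ :=
    fun g hg => (fst_mem_twistedCenter_iff hσ₂ hg).mpr (hvanish g hg)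
  have hle : lift.{v} #(cosetsIn (twistedCenter σ₁) Set.univ) ≤
      #(cosetsIn (twistedCenter (twistedProduct σ₁ σ₂ f)) Set.univ) := by
    have hσ := isTwoCocycle_twistedProduct hσ₁ hσ₂ f
    have hquot : lift.{max u v} #(G₁ ⧸ hσ₁.twistedCenterSubgroup) ≤
        lift.{u} #((G₁ × G₂) ⧸ hσ.twistedCenterSubgroup) :=
      lift_mk_quotient_le_of_surjective (φ := MonoidHom.fst G₁ G₂) Prod.fst_surjective hfst
    rwa [← hσ₁.mk_cosetsIn_twistedCenter, ← hσ.mk_cosetsIn_twistedCenter, lift_umax.{u, v},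
      lift_id'.{u, max u v}] at hquot
  refine ⟨Set.image_subset_iff.mpr hfst, hle, fun hinf => ?_⟩
  rw [← Set.infinite_coe_iff, infinite_iff] at hinf ⊢
  exact (aleph0_le_lift.mpr hinf).trans hle

end Product

end

/-- Let `G₁, G₂` be discrete abelian groups with 2-cocycles `σ₁, σ₂`,
`f : G₁ × G₂ → 𝕋` a bihomomorphism, and
`σ((g₁,g₂),(h₁,h₂)) = σ₁(g₁,h₁)σ₂(g₂,h₂)f(h₁,g₂)`.  If `f(h₁,g₂) = 1` for every
`(g₁,g₂) ∈ Z(G₁×G₂,σ)` and every `h₁ ∈ G₁`, then the first-coordinate projection maps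
`Z(G₁×G₂,σ)` into `Z(G₁,σ₁)`, the index of `Z(G₁×G₂,σ)` in `G₁×G₂` is at least the
index of `Z(G₁,σ₁)` in `G₁`, and in particular infiniteness of the latter index implies
infiniteness of the former. -/
theorem twistedCenter_product_projection.{u}
    (G₁ G₂ : Type u) [CommGroup G₁] [CommGroup G₂]
    (σ₁ : G₁ → G₁ → Circle) (hσ₁ : IsTwoCocycle σ₁)
    (σ₂ : G₂ → G₂ → Circle) (hσ₂ : IsTwoCocycle σ₂)
    (f : G₁ → G₂ → Circle)
    (hf₁ : ∀ g g' : G₁, ∀ h : G₂, f (g * g') h = f g h * f g' h)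
    (hf₂ : ∀ g : G₁, ∀ h h' : G₂, f g (h * h') = f g h * f g h')
    (σ : G₁ × G₂ → G₁ × G₂ → Circle)
    (hσ : ∀ g h : G₁ × G₂, σ g h = σ₁ g.1 h.1 * σ₂ g.2 h.2 * f h.1 g.2)
    (hvanish : ∀ g ∈ twistedCenter σ, ∀ h₁ : G₁, f h₁ g.2 = 1) :
    (Prod.fst '' twistedCenter σ ⊆ twistedCenter σ₁) ∧
      Cardinal.mk (cosetsIn (twistedCenter σ₁) (Set.univ : Set G₁)) ≤
        Cardinal.mk (cosetsIn (twistedCenter σ) (Set.univ : Set (G₁ × G₂))) ∧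
      ((cosetsIn (twistedCenter σ₁) (Set.univ : Set G₁)).Infinite →
        (cosetsIn (twistedCenter σ) (Set.univ : Set (G₁ × G₂))).Infinite) := by
  obtain rfl : σ = twistedProduct σ₁ σ₂ (.mk' (fun g => .mk' (f g) (hf₂ g))
    fun g g' => MonoidHom.ext (hf₁ g g')) := funext₂ hσ
  simpa only [Cardinal.lift_id] using twistedCenter_product_projection_general hσ₁ hσ₂ hvanish
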